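/- (Mutual singularity of the conditioned measures.) Assume (H1'), (H2) and (H3) as above, and let ρ be a density matrix with p_0^{(j)} = Tr(P_j ρ) > 0 for all j. For each j define ℙ_ρ^{(j)} = (p_∞^{(j)}/p_0^{(j)}) ℙ_ρ, where p_∞^{(j)} is the a.s. limit of the martingale p_n^{(j)} = Tr(P_j ρ_n). For i ∈ {1,…,2d} let N_n(i) = #{1 ≤ k ≤ n : X_k − X_{k-1} = e_i} be the number of jumps in direction e_i up to time n. Then for each j, under ℙ_ρ^{(j)} one has N_n(i)/n → m_i^{(j)} = Tr(A_i ρ_∞^{(j)} A_i^*) almost surely for every i, and consequently the probability measures ℙ_ρ^{(1)},…,ℙ_ρ^{(N)} are pairwise mutually singular. -/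

import Mathlib

open MeasureTheory Filter Matrix Finset
open scoped ComplexOrder

noncomputable section

/-- The direction vectors `e_1, …, e_{2d}` in `ℤ^d`, with `e_{d+j} = -e_j`. -/
def dir (d : ℕ) (i : Fin (2 * d)) : Fin d → ℤ :=
  fun j => if (i : ℕ) < d then (if (j : ℕ) = (i : ℕ) then 1 else 0)
           else (if (j : ℕ) = (i : ℕ) - d then -1 else 0)

/-- The direction vectors viewed in `ℝ^d`. -/
def dirR (d : ℕ) (i : Fin (2 * d)) : Fin d → ℝ := fun j => (dir d i j : ℝ)

instance {k : ℕ} : MeasurableSpace (Matrix (Fin k) (Fin k) ℂ) := MeasurableSpace.pi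

/-- A density matrix: positive semidefinite with trace one. -/
def IsDensity {k : ℕ} (ρ : Matrix (Fin k) (Fin k) ℂ) : Prop := ρ.PosSemidef ∧ ρ.trace = 1

/-- The quantum trajectory process of the open quantum random walk. -/
structure IsQTraj {k d : ℕ} {Ω : Type} {mΩ : MeasurableSpace Ω}
    (A : Fin (2 * d) → Matrix (Fin k) (Fin k) ℂ)
    (μ : Measure Ω) (ℱ : Filtration ℕ mΩ)
    (ρ : ℕ → Ω → Matrix (Fin k) (Fin k) ℂ)
    (X : ℕ → Ω → Fin d → ℤ) : Prop where
  density : ∀ n, ∀ᵐ ω ∂μ, IsDensity (ρ n ω)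
  adapted_ρ : ∀ n, Measurable[ℱ n] (ρ n)
  adapted_X : ∀ n, Measurable[ℱ n] (X n)
  prob : ∀ (n : ℕ) (j : Fin (2 * d)),
    μ[(fun ω => if X (n + 1) ω = X n ω + dir d j then (1 : ℝ) else 0) | ℱ n]
      =ᵐ[μ] fun ω => ((A j * ρ n ω * (A j)ᴴ).trace).re
  update : ∀ (n : ℕ) (j : Fin (2 * d)), ∀ᵐ ω ∂μ,
    X (n + 1) ω = X n ω + dir d j →
      ρ (n + 1) ω = ((A j * ρ n ω * (A j)ᴴ).trace)⁻¹ • (A j * ρ n ω * (A j)ᴴ)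

/-!
The matrix-valued increments `1{jump i at time s} ρ_{s+1} - A_i ρ_s A_i^*` are bounded martingale
differences, so by a strong law of large numbers their Cesàro means vanish almost surely.
Summing over `i`, the Cesàro means `S_n` of the trajectory are asymptotically invariant under the
Kraus map of `A`. Since `P_j` commutes with the `A_i`, the compressions `P_j S_n P_j` are
asymptotically invariant as well, and by compactness and (H2) they converge to
`p_∞^{(j)} ρ_∞^{(j)}`. Comparing traces against `P_j` in the strong law gives
`p_∞^{(j)} N_n(i) / n → p_∞^{(j)} m_i^{(j)}`, and `p_∞^{(j)} > 0` holds almost surely under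
`ℙ_ρ^{(j)}`. By (H3) the measures are then carried by disjoint events.
-/

open scoped Topology Matrix.Norms.Frobenius

section CesaroMean

variable {E F : Type*} [AddCommGroup E] [Module ℝ E] [AddCommGroup F] [Module ℝ F]

/-- The Cesàro mean `(x 0 + ⋯ + x (n - 1)) / n`, as a linear map in the sequence `x`.
It is `0` for `n = 0`. -/
def cesaroMean (n : ℕ) : (ℕ → E) →ₗ[ℝ] E :=
  (n : ℝ)⁻¹ • ∑ s ∈ range n, LinearMap.proj s

lemma cesaroMean_apply (n : ℕ) (x : ℕ → E) :
    cesaroMean n x = (n : ℝ)⁻¹ • ∑ s ∈ range n, x s := by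
  simp [cesaroMean]

lemma map_cesaroMean (f : E →ₗ[ℝ] F) (n : ℕ) (x : ℕ → E) :
    f (cesaroMean n x) = cesaroMean n fun s => f (x s) := by
  simp [cesaroMean_apply]

end CesaroMean

section CesaroLimits

variable {E : Type*} [NormedAddCommGroup E] [NormedSpace ℝ E] {x : ℕ → E} {l : E} {C : ℝ}

lemma tendsto_cesaroMean (hx : Tendsto x atTop (𝓝 l)) :
    Tendsto (fun n => cesaroMean n x) atTop (𝓝 l) := by
  simpa only [cesaroMean_apply] using hx.cesaro_smul

lemma tendsto_cesaroMean_succ_sub (hx : ∀ n, ‖x n‖ ≤ C) :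
    Tendsto (fun n => cesaroMean n fun s => x (s + 1) - x s) atTop (𝓝 0) := by
  have hbound (n : ℕ) : ‖cesaroMean n fun s => x (s + 1) - x s‖ ≤ (n : ℝ)⁻¹ * (C + C) := by
    rw [cesaroMean_apply, sum_range_sub, norm_smul, norm_inv, RCLike.norm_natCast]
    gcongr
    exact (norm_sub_le _ _).trans (add_le_add (hx n) (hx 0))
  refine squeeze_zero_norm hbound ?_
  simpa using (tendsto_inv_atTop_nhds_zero_nat (𝕜 := ℝ)).mul_const (C + C)

lemma tendsto_cesaroMean_smul_sub {a : ℕ → ℝ} (ha : ∀ n, |a n| ≤ C)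
    (hx : Tendsto x atTop (𝓝 l)) :
    Tendsto (fun n => cesaroMean n (fun s => a s • x s) - cesaroMean n a • l) atTop (𝓝 0) := by
  have hterm : Tendsto (fun s => a s • (x s - l)) atTop (𝓝 0) := by
    refine squeeze_zero_norm (a := fun s => C * ‖x s - l‖) (fun s => ?_) ?_
    · rw [norm_smul, Real.norm_eq_abs]
      gcongr
      exact ha s
    · simpa using (tendsto_iff_norm_sub_tendsto_zero.1 hx).const_mul C
  refine (tendsto_cesaroMean hterm).congr fun n => ?_
  simp only [cesaroMean_apply, smul_sub, sum_sub_distrib, sum_smul, smul_assoc]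

/-- Kronecker's lemma, by Abel summation: if `T n` denotes the weighted partial sum then
`cesaroMean n y = T n - cesaroMean n T`. -/
lemma tendsto_cesaroMean_zero_of_tendsto_sum {y : ℕ → E}
    (h : Tendsto (fun n => ∑ s ∈ range n, ((s : ℝ) + 1)⁻¹ • y s) atTop (𝓝 l)) :
    Tendsto (fun n => cesaroMean n y) atTop (𝓝 0) := by
  set T : ℕ → E := fun n => ∑ s ∈ range n, ((s : ℝ) + 1)⁻¹ • y s with hT
  have abel (n : ℕ) : ∑ s ∈ range n, y s = (n : ℝ) • T n - ∑ m ∈ range n, T m := by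
    induction n with
    | zero => simp
    | succ n ih =>
      have hstep : ((n : ℝ) + 1) • T (n + 1) = ((n : ℝ) + 1) • T n + y n := by
        simp only [hT, sum_range_succ, smul_add]
        rw [smul_inv_smul₀ (by positivity)]
      rw [sum_range_succ, ih, sum_range_succ T, Nat.cast_succ, hstep, add_smul, one_smul]
      abel
  have hdiff : Tendsto (fun n => T n - cesaroMean n T) atTop (𝓝 0) := by
    simpa using h.sub (tendsto_cesaroMean h)
  refine hdiff.congr' ?_
  filter_upwards [eventually_ne_atTop 0] with n hn
  rw [cesaroMean_apply, cesaroMean_apply, abel, smul_sub, inv_smul_smul₀ (by exact_mod_cast hn)]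

end CesaroLimits

section StrongLaw

variable {Ω E : Type*} {mΩ : MeasurableSpace Ω} {μ : Measure Ω} [IsFiniteMeasure μ]
  {ℱ : Filtration ℕ mΩ} [NormedAddCommGroup E] [NormedSpace ℝ E]

lemma integral_mul_increment_eq_zero {M : ℕ → Ω → ℝ} (hM : Martingale M ℱ μ)
    (hL2 : ∀ n, MemLp (M n) 2 μ) (n : ℕ) :
    ∫ ω, M n ω * (M (n + 1) ω - M n ω) ∂μ = 0 := by
  have hΔ : Integrable (M (n + 1) - M n) μ := (hM.integrable _).sub (hM.integrable _)
  have hΔ0 : μ[M (n + 1) - M n | ℱ n] =ᵐ[μ] 0 := by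
    filter_upwards [condExp_sub (hM.integrable (n + 1)) (hM.integrable n) (ℱ n),
      hM.condExp_ae_eq n.le_succ, hM.condExp_ae_eq (le_refl n)] with ω hsub hsucc hself
    rw [hsub, Pi.sub_apply, hsucc, hself, sub_self, Pi.zero_apply]
  have hpull := condExp_mul_of_stronglyMeasurable_left (hM.stronglyMeasurable n)
    ((hL2 n).integrable_mul ((hL2 (n + 1)).sub (hL2 n))) hΔ
  calc ∫ ω, M n ω * (M (n + 1) ω - M n ω) ∂μ
      = ∫ ω, (μ[M n * (M (n + 1) - M n) | ℱ n]) ω ∂μ := (integral_condExp (ℱ.le n)).symm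
    _ = ∫ _, (0 : ℝ) ∂μ := integral_congr_ae <| by
        filter_upwards [hpull, hΔ0] with ω h h0
        rw [h, Pi.mul_apply, h0, Pi.zero_apply, mul_zero]
    _ = 0 := integral_zero _ _

lemma integral_sq_martingale {M : ℕ → Ω → ℝ} (hM : Martingale M ℱ μ)
    (hL2 : ∀ n, MemLp (M n) 2 μ) (n : ℕ) :
    ∫ ω, M n ω ^ 2 ∂μ =
      ∫ ω, M 0 ω ^ 2 ∂μ + ∑ s ∈ range n, ∫ ω, (M (s + 1) ω - M s ω) ^ 2 ∂μ := by
  induction n with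
  | zero => simp
  | succ n ih =>
    have hΔ : MemLp (fun ω => M (n + 1) ω - M n ω) 2 μ := (hL2 (n + 1)).sub (hL2 n)
    have hexpand : (fun ω => M (n + 1) ω ^ 2) = fun ω => M n ω ^ 2 +
        (2 * (M n ω * (M (n + 1) ω - M n ω)) + (M (n + 1) ω - M n ω) ^ 2) := by
      ext ω; ring
    have hcross : Integrable (fun ω => 2 * (M n ω * (M (n + 1) ω - M n ω))) μ :=
      ((hL2 n).integrable_mul hΔ).const_mul 2
    have hrest : Integrable (fun ω => 2 * (M n ω * (M (n + 1) ω - M n ω)) +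
        (M (n + 1) ω - M n ω) ^ 2) μ := hcross.add hΔ.integrable_sq
    rw [hexpand, integral_add (hL2 n).integrable_sq hrest,
      integral_add hcross hΔ.integrable_sq, integral_const_mul,
      integral_mul_increment_eq_zero hM hL2, ih, sum_range_succ]
    ring

lemma ae_exists_tendsto_of_summable_integral_sq_increment {M : ℕ → Ω → ℝ}
    (hM : Martingale M ℱ μ) (hL2 : ∀ n, MemLp (M n) 2 μ)
    (hsum : Summable fun n => ∫ ω, (M (n + 1) ω - M n ω) ^ 2 ∂μ) :
    ∀ᵐ ω ∂μ, ∃ c, Tendsto (fun n => M n ω) atTop (𝓝 c) := by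
  set K := ∫ ω, M 0 ω ^ 2 ∂μ + ∑' n, ∫ ω, (M (n + 1) ω - M n ω) ^ 2 ∂μ
  have hsq (n : ℕ) : ∫ ω, M n ω ^ 2 ∂μ ≤ K := by
    rw [integral_sq_martingale hM hL2]
    exact add_le_add le_rfl
      (hsum.sum_le_tsum _ fun s _ => integral_nonneg fun ω => sq_nonneg _)
  have habs (n : ℕ) : ∫ ω, ‖M n ω‖ ∂μ ≤ μ.real Set.univ + K :=
    calc ∫ ω, ‖M n ω‖ ∂μ ≤ ∫ ω, (1 + M n ω ^ 2) ∂μ :=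
          integral_mono (hM.integrable n).norm ((integrable_const 1).add (hL2 n).integrable_sq)
            fun ω => by
              rw [Real.norm_eq_abs, ← sq_abs]
              nlinarith [sq_nonneg (|M n ω| - 1), abs_nonneg (M n ω)]
      _ ≤ μ.real Set.univ + K := by
          rw [integral_add (integrable_const 1) (hL2 n).integrable_sq, integral_const, smul_eq_mul,
            mul_one]
          gcongr
          exact hsq n
  refine hM.submartingale.exists_ae_tendsto_of_bdd (R := (μ.real Set.univ + K).toNNReal)
    fun n => ?_
  rw [eLpNorm_one_eq_lintegral_enorm, ← ofReal_integral_norm_eq_lintegral_enorm (hM.integrable n)]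
  exact ENNReal.ofReal_le_ofReal (habs n)

lemma martingale_sum_range [CompleteSpace E] {D : ℕ → Ω → E}
    (hmeas : ∀ n, StronglyMeasurable[ℱ (n + 1)] (D n)) (hint : ∀ n, Integrable (D n) μ)
    (hzero : ∀ n, μ[D n | ℱ n] =ᵐ[μ] 0) :
    Martingale (fun n => ∑ s ∈ range n, D s) ℱ μ := by
  refine martingale_of_condExp_sub_eq_zero_nat (fun n => ?_)
    (fun n => integrable_finsetSum' _ fun s _ => hint s) fun n => ?_
  · exact Finset.stronglyMeasurable_sum _ fun s hs =>
      (hmeas s).mono (ℱ.mono (Nat.succ_le_of_lt (mem_range.1 hs)))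
  · simpa only [sum_range_succ_sub_sum] using hzero n

/-- The weighted sums `∑ s < n, Y s / (s + 1)` form an `L²`-bounded martingale. -/
lemma ae_tendsto_cesaroMean_zero_of_summable_integral_sq {Y : ℕ → Ω → ℝ}
    (hmeas : ∀ n, StronglyMeasurable[ℱ (n + 1)] (Y n)) (hL2 : ∀ n, MemLp (Y n) 2 μ)
    (hzero : ∀ n, μ[Y n | ℱ n] =ᵐ[μ] 0)
    (hsum : Summable fun n : ℕ => (((n : ℝ) + 1)⁻¹) ^ 2 * ∫ ω, Y n ω ^ 2 ∂μ) :
    ∀ᵐ ω ∂μ, Tendsto (fun n => cesaroMean n fun s => Y s ω) atTop (𝓝 0) := by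
  set D : ℕ → Ω → ℝ := fun n => ((n : ℝ) + 1)⁻¹ • Y n
  have hDL2 (n : ℕ) : MemLp (D n) 2 μ := (hL2 n).const_smul _
  have hmart : Martingale (fun n => ∑ s ∈ range n, D s) ℱ μ := by
    refine martingale_sum_range (fun n => (hmeas n).const_smul _)
      (fun n => (hDL2 n).integrable one_le_two) fun n => ?_
    filter_upwards [condExp_smul ((n : ℝ) + 1)⁻¹ (Y n) (ℱ n), hzero n] with ω hsmul h0
    rw [hsmul, Pi.smul_apply, h0, Pi.zero_apply, smul_zero]
  have hincr : Summable fun n =>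
      ∫ ω, ((∑ s ∈ range (n + 1), D s) ω - (∑ s ∈ range n, D s) ω) ^ 2 ∂μ := by
    refine hsum.congr fun n => ?_
    simp only [sum_range_succ, Pi.add_apply, add_sub_cancel_left, D, Pi.smul_apply, smul_eq_mul,
      mul_pow, integral_const_mul]
  filter_upwards [ae_exists_tendsto_of_summable_integral_sq_increment hmart
    (fun n => memLp_finsetSum' _ fun s _ => hDL2 s) hincr] with ω ⟨c, hc⟩
  refine tendsto_cesaroMean_zero_of_tendsto_sum (l := c) ?_
  simpa only [Finset.sum_apply, D, Pi.smul_apply] using hc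

lemma summable_inv_succ_sq : Summable fun n : ℕ => (((n : ℝ) + 1)⁻¹) ^ 2 := by
  simpa using (summable_nat_add_iff 1).2 (Real.summable_nat_pow_inv.2 one_lt_two)

lemma ae_tendsto_cesaroMean_zero_of_abs_le {Y : ℕ → Ω → ℝ} {C : ℝ}
    (hmeas : ∀ n, StronglyMeasurable[ℱ (n + 1)] (Y n)) (hbdd : ∀ n, ∀ᵐ ω ∂μ, |Y n ω| ≤ C)
    (hzero : ∀ n, μ[Y n | ℱ n] =ᵐ[μ] 0) :
    ∀ᵐ ω ∂μ, Tendsto (fun n => cesaroMean n fun s => Y s ω) atTop (𝓝 0) := by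
  have hL2 (n : ℕ) : MemLp (Y n) 2 μ :=
    MemLp.of_bound ((hmeas n).mono (ℱ.le _)).aestronglyMeasurable C (hbdd n)
  have hsq (n : ℕ) : ∫ ω, Y n ω ^ 2 ∂μ ≤ C ^ 2 * μ.real Set.univ := by
    calc ∫ ω, Y n ω ^ 2 ∂μ ≤ ∫ _, C ^ 2 ∂μ := by
          refine integral_mono_ae (hL2 n).integrable_sq (integrable_const _) ?_
          filter_upwards [hbdd n] with ω hω using sq_le_sq' (abs_le.1 hω).1 (abs_le.1 hω).2
      _ = C ^ 2 * μ.real Set.univ := by rw [integral_const, smul_eq_mul, mul_comm]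
  refine ae_tendsto_cesaroMean_zero_of_summable_integral_sq hmeas hL2 hzero ?_
  refine Summable.of_nonneg_of_le
    (fun n => mul_nonneg (sq_nonneg _) (integral_nonneg fun ω => sq_nonneg _)) (fun n => ?_)
    (summable_inv_succ_sq.mul_right (C ^ 2 * μ.real Set.univ))
  gcongr
  exact hsq n

lemma ae_tendsto_cesaroMean_zero_of_norm_le [FiniteDimensional ℝ E] {Y : ℕ → Ω → E} {C : ℝ}
    (hmeas : ∀ n, StronglyMeasurable[ℱ (n + 1)] (Y n)) (hbdd : ∀ n, ∀ᵐ ω ∂μ, ‖Y n ω‖ ≤ C)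
    (hzero : ∀ n, μ[Y n | ℱ n] =ᵐ[μ] 0) :
    ∀ᵐ ω ∂μ, Tendsto (fun n => cesaroMean n fun s => Y s ω) atTop (𝓝 0) := by
  have : CompleteSpace E := FiniteDimensional.complete ℝ E
  have hint (n : ℕ) : Integrable (Y n) μ :=
    .of_bound ((hmeas n).mono (ℱ.le _)).aestronglyMeasurable C (hbdd n)
  have hfunctional (φ : E →L[ℝ] ℝ) :
      ∀ᵐ ω ∂μ, Tendsto (fun n => φ (cesaroMean n fun s => Y s ω)) atTop (𝓝 0) := by
    simp only [← ContinuousLinearMap.coe_coe, map_cesaroMean]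
    refine ae_tendsto_cesaroMean_zero_of_abs_le (C := ‖φ‖ * C)
      (fun n => φ.continuous.comp_stronglyMeasurable (hmeas n)) (fun n => ?_) fun n => ?_
    · filter_upwards [hbdd n] with ω hω using φ.le_opNorm_of_le hω
    · filter_upwards [φ.comp_condExp_comm (m := ℱ n) (hint n), hzero n] with ω hcomm h0
      exact hcomm.symm.trans <| by
        rw [Function.comp_apply, h0, Pi.zero_apply, map_zero, Pi.zero_apply]
  let b := Module.finBasis ℝ E
  filter_upwards [ae_all_iff.2 fun i => hfunctional (b.coord i).toContinuousLinearMap] with ω hω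
  have hrepr : Tendsto (fun n => ∑ i, b.coord i (cesaroMean n fun s => Y s ω) • b i)
      atTop (𝓝 (∑ i, (0 : ℝ) • b i)) := tendsto_finsetSum _ fun i _ => (hω i).smul_const (b i)
  simpa [b.sum_repr] using hrepr

theorem ae_tendsto_cesaroMean_sub_condExp [FiniteDimensional ℝ E] {Y : ℕ → Ω → E} {C : ℝ}
    (hmeas : ∀ n, StronglyMeasurable[ℱ (n + 1)] (Y n)) (hbdd : ∀ n, ∀ᵐ ω ∂μ, ‖Y n ω‖ ≤ C) :
    ∀ᵐ ω ∂μ, Tendsto (fun n => cesaroMean n fun s => Y s ω - (μ[Y s | ℱ s]) ω) atTop (𝓝 0) := by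
  have : CompleteSpace E := FiniteDimensional.complete ℝ E
  have hint (n : ℕ) : Integrable (Y n) μ :=
    .of_bound ((hmeas n).mono (ℱ.le _)).aestronglyMeasurable C (hbdd n)
  refine ae_tendsto_cesaroMean_zero_of_norm_le (Y := fun n => Y n - μ[Y n | ℱ n]) (C := C + C)
    (fun n => (hmeas n).sub (stronglyMeasurable_condExp.mono (ℱ.mono n.le_succ)))
    (fun n => ?_) fun n => ?_
  · filter_upwards [hbdd n, ae_bdd_norm_condExp_of_ae_bdd_norm (m := ℱ n) (hbdd n)] with ω hY hcond
    exact (norm_sub_le _ _).trans (add_le_add hY hcond)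
  · filter_upwards [condExp_sub (hint n) integrable_condExp (ℱ n),
      condExp_condExp_of_le (μ := μ) (f := Y n) le_rfl (ℱ.le n)] with ω hsub hidem
    rw [hsub, Pi.sub_apply, hidem, sub_self, Pi.zero_apply]

end StrongLaw

lemma tendsto_of_isCompact_of_unique_preimage {α X Y : Type*} [TopologicalSpace X]
    [TopologicalSpace Y] [T2Space Y] {F : Filter α} {K : Set X} {f : X → Y} {u : α → X} {x : X}
    {y : Y} (hK : IsCompact K) (huK : ∀ᶠ a in F, u a ∈ K) (hf : Continuous f)
    (hfu : Tendsto (fun a => f (u a)) F (𝓝 y)) (huniq : ∀ z ∈ K, f z = y → z = x) :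
    Tendsto u F (𝓝 x) := by
  refine hK.tendsto_nhds_of_unique_mapClusterPt huK fun z hzK hz => huniq z hzK ?_
  have hfz : MapClusterPt (f z) F (f ∘ u) := hz.continuousAt_comp hf.continuousAt
  exact eq_of_nhds_neBot (hfz.neBot.mono (inf_le_inf_left _ hfu))

section PosSemidef

lemma isClosed_posSemidef {m : Type*} [Finite m] :
    IsClosed {M : Matrix m m ℂ | M.PosSemidef} := by
  have := Fintype.ofFinite m
  simp only [posSemidef_iff_dotProduct_mulVec, Set.ofPred_and, Set.ofPred_forall]
  refine (isClosed_eq (by fun_prop) (by fun_prop)).inter (isClosed_iInter fun x => ?_)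
  exact isClosed_le (by fun_prop) (by fun_prop)

lemma posSemidef_cesaroMean {m : Type*} {x : ℕ → Matrix m m ℂ} (hx : ∀ n, (x n).PosSemidef)
    (n : ℕ) : (cesaroMean n x).PosSemidef := by
  rw [cesaroMean_apply]
  exact (posSemidef_sum _ fun s _ => hx s).smul (by positivity : (0 : ℝ) ≤ (n : ℝ)⁻¹)

variable {m : Type*} [Fintype m] {M : Matrix m m ℂ}

lemma trace_re_nonneg_of_posSemidef (hM : M.PosSemidef) : 0 ≤ M.trace.re :=
  (Complex.nonneg_iff.1 hM.trace_nonneg).1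

lemma ofReal_trace_re_of_posSemidef (hM : M.PosSemidef) : (M.trace.re : ℂ) = M.trace :=
  Complex.ext rfl (Complex.nonneg_iff.1 hM.trace_nonneg).2

lemma trace_conjTranspose_mul_self_re (B : Matrix m m ℂ) : (Bᴴ * B).trace.re = ‖B‖ ^ 2 := by
  rw [frobenius_norm_def, ← Real.sqrt_eq_rpow, Real.sq_sqrt (by positivity), sum_comm, trace]
  simp [mul_apply, ← Complex.normSq_eq_conj_mul_self, Complex.normSq_eq_norm_sq,
    -Complex.ofReal_pow]

open scoped MatrixOrder in
lemma norm_le_trace_re_of_posSemidef (hM : M.PosSemidef) : ‖M‖ ≤ M.trace.re := by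
  classical
  obtain ⟨B, rfl⟩ := CStarAlgebra.nonneg_iff_eq_star_mul_self.mp hM.nonneg
  calc ‖Bᴴ * B‖ ≤ ‖Bᴴ‖ * ‖B‖ := frobenius_norm_mul Bᴴ B
    _ = (Bᴴ * B).trace.re := by
      rw [frobenius_norm_conjTranspose, trace_conjTranspose_mul_self_re, sq]

lemma isCompact_posSemidef_trace_re_le (c : ℝ) :
    IsCompact {M : Matrix m m ℂ | M.PosSemidef ∧ M.trace.re ≤ c} := by
  refine Metric.isCompact_of_isClosed_isBounded (isClosed_posSemidef.inter
    (isClosed_le (f := fun M : Matrix m m ℂ => M.trace.re) (by fun_prop) continuous_const)) ?_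
  exact (Metric.isBounded_closedBall (x := (0 : Matrix m m ℂ)) (r := c)).subset fun M hM =>
    mem_closedBall_zero_iff.2 ((norm_le_trace_re_of_posSemidef hM.1).trans hM.2)

lemma norm_inv_trace_smul_le_one (hM : M.PosSemidef) : ‖M.trace⁻¹ • M‖ ≤ 1 := by
  have htr := trace_re_nonneg_of_posSemidef hM
  rw [norm_smul, norm_inv, ← ofReal_trace_re_of_posSemidef hM, Complex.norm_of_nonneg htr]
  exact inv_mul_le_one_of_le₀ (norm_le_trace_re_of_posSemidef hM) htr

lemma trace_re_smul_inv_trace_smul (hM : M.PosSemidef) : M.trace.re • M.trace⁻¹ • M = M := by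
  rw [← Complex.coe_smul, ofReal_trace_re_of_posSemidef hM]
  by_cases htr : M.trace = 0
  · simp [hM.trace_eq_zero_iff.1 htr]
  · exact smul_inv_smul₀ htr M

end PosSemidef

section KrausMap

variable {ι m : Type*} [Fintype m] {A : ι → Matrix m m ℂ} {Q : Matrix m m ℂ}

/-- The probability that the Kraus operator `A i` acts on the state `σ`. -/
def jumpProb (A : ι → Matrix m m ℂ) (σ : Matrix m m ℂ) (i : ι) : ℝ :=
  (A i * σ * (A i)ᴴ).trace.re

lemma mul_cesaroMean_mul (B C : Matrix m m ℂ) (n : ℕ) (x : ℕ → Matrix m m ℂ) :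
    B * cesaroMean n x * C = cesaroMean n fun s => B * x s * C := by
  simp only [cesaroMean_apply, Matrix.mul_smul, Matrix.smul_mul, mul_sum, sum_mul]

lemma trace_mul_cesaroMean_re (B : Matrix m m ℂ) (n : ℕ) (x : ℕ → Matrix m m ℂ) :
    (B * cesaroMean n x).trace.re = cesaroMean n fun s => (B * x s).trace.re := by
  simp [cesaroMean_apply, mul_sum, trace_sum]

lemma trace_compress (hQ : IsStarProjection Q) (M : Matrix m m ℂ) :
    (Q * M * Q).trace = (Q * M).trace := by
  rw [trace_mul_comm, ← Matrix.mul_assoc, hQ.isIdempotentElem]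

lemma posSemidef_compress (hQ : IsStarProjection Q) {M : Matrix m m ℂ} (hM : M.PosSemidef) :
    (Q * M * Q).PosSemidef := by
  have hself : Qᴴ = Q := hQ.isSelfAdjoint
  simpa only [hself] using hM.mul_mul_conjTranspose_same Q

lemma conj_compress (hQ : IsStarProjection Q) {B : Matrix m m ℂ} (hcomm : Commute Q B)
    (M : Matrix m m ℂ) : B * (Q * M * Q) * Bᴴ = Q * (B * M * Bᴴ) * Q := by
  have hself : Qᴴ = Q := hQ.isSelfAdjoint
  have hstar : Q * Bᴴ = Bᴴ * Q := by
    simpa only [star_eq_conjTranspose, hself] using hcomm.star_star.eq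
  simp only [← Matrix.mul_assoc, hcomm.eq]
  simp only [Matrix.mul_assoc, hstar]

lemma jumpProb_compress (hQ : IsStarProjection Q) {i : ι} (hcomm : Commute Q (A i))
    (M : Matrix m m ℂ) : jumpProb A (Q * M * Q) i = (Q * (A i * M * (A i)ᴴ)).trace.re := by
  rw [jumpProb, conj_compress hQ hcomm, trace_compress hQ]

variable [Fintype ι]

/-- The completely positive map `M ↦ ∑ i, A i * M * (A i)ᴴ` with Kraus operators `A`. -/
def krausMap (A : ι → Matrix m m ℂ) (M : Matrix m m ℂ) : Matrix m m ℂ :=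
  ∑ i, A i * M * (A i)ᴴ

lemma krausMap_smul (c : ℂ) (M : Matrix m m ℂ) : krausMap A (c • M) = c • krausMap A M := by
  simp only [krausMap, Matrix.mul_smul, Matrix.smul_mul, smul_sum]

@[fun_prop]
lemma continuous_krausMap : Continuous (krausMap A) := by
  unfold krausMap
  fun_prop

lemma krausMap_cesaroMean (n : ℕ) (x : ℕ → Matrix m m ℂ) :
    krausMap A (cesaroMean n x) = cesaroMean n fun s => krausMap A (x s) := by
  simp only [krausMap, mul_cesaroMean_mul, ← map_sum]
  congr 1
  ext1 s
  rw [Finset.sum_apply]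

lemma krausMap_compress (hQ : IsStarProjection Q) (hcomm : ∀ i, Commute Q (A i))
    (M : Matrix m m ℂ) :
    krausMap (fun i => A i * Q) (Q * M * Q) = Q * krausMap A M * Q := by
  have hself : Qᴴ = Q := hQ.isSelfAdjoint
  have hidem : Q * Q = Q := hQ.isIdempotentElem
  simp only [krausMap, mul_sum, sum_mul, conjTranspose_mul, hself]
  refine sum_congr rfl fun i _ => ?_
  rw [← conj_compress hQ (hcomm i)]
  calc A i * Q * (Q * M * Q) * (Q * (A i)ᴴ) = A i * (Q * Q * M * (Q * Q)) * (A i)ᴴ := by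
        simp only [Matrix.mul_assoc]
    _ = A i * (Q * M * Q) * (A i)ᴴ := by rw [hidem]

lemma sum_jumpProb [DecidableEq m] (hA : ∑ i, (A i)ᴴ * A i = 1) (σ : Matrix m m ℂ) :
    ∑ i, jumpProb A σ i = σ.trace.re := by
  have hcycle (i : ι) : jumpProb A σ i = ((A i)ᴴ * A i * σ).trace.re := by
    rw [jumpProb, trace_mul_comm, ← Matrix.mul_assoc]
  simp only [hcycle, ← Complex.re_sum, ← trace_sum, ← sum_mul, hA, Matrix.one_mul]

end KrausMap

section InvariantState

variable {ι : Type*} [Fintype ι] {k : ℕ} {A : ι → Matrix (Fin k) (Fin k) ℂ}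
  {Q r : Matrix (Fin k) (Fin k) ℂ}

/-- A density matrix `σ` supported on the range of the projection `Q` and invariant under the
Kraus map of the restricted operators `A i * Q`. -/
structure IsInvariantState (A : ι → Matrix (Fin k) (Fin k) ℂ) (Q σ : Matrix (Fin k) (Fin k) ℂ) :
    Prop where
  isDensity : IsDensity σ
  compress_eq : Q * σ * Q = σ
  krausMap_eq : krausMap (fun i => A i * Q) σ = σ

/-- The state `r` is the only invariant state on the range of the projection `Q`. -/
structure IsUniqueInvariantState (A : ι → Matrix (Fin k) (Fin k) ℂ)
    (Q r : Matrix (Fin k) (Fin k) ℂ) : Prop where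
  isInvariantState : IsInvariantState A Q r
  eq_of_isInvariantState : ∀ σ, IsInvariantState A Q σ → σ = r

lemma IsUniqueInvariantState.eq_smul (hr : IsUniqueInvariantState A Q r)
    {M : Matrix (Fin k) (Fin k) ℂ} (hM : M.PosSemidef) (hpos : 0 < M.trace.re)
    (hcompress : Q * M * Q = M) (hfix : krausMap (fun i => A i * Q) M = M) :
    M = M.trace.re • r := by
  have htr : M.trace ≠ 0 := fun h => hpos.ne' (by rw [h, Complex.zero_re])
  have hinv : IsInvariantState A Q (M.trace⁻¹ • M) :=
    { isDensity := ⟨hM.smul (inv_nonneg.2 hM.trace_nonneg), by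
        rw [trace_smul, smul_eq_mul, inv_mul_cancel₀ htr]⟩
      compress_eq := by rw [Matrix.mul_smul, Matrix.smul_mul, hcompress]
      krausMap_eq := by rw [krausMap_smul, hfix] }
  rw [← hr.eq_of_isInvariantState _ hinv, trace_re_smul_inv_trace_smul hM]

lemma IsUniqueInvariantState.tendsto_compress (hr : IsUniqueInvariantState A Q r)
    (hQ : IsStarProjection Q) (hcomm : ∀ i, Commute Q (A i))
    {S : ℕ → Matrix (Fin k) (Fin k) ℂ} (hS : ∀ n, (S n).PosSemidef)
    (hasymp : Tendsto (fun n => S n - krausMap A (S n)) atTop (𝓝 0)) {p : ℝ} (hp : 0 < p)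
    (htr : Tendsto (fun n => (Q * S n).trace.re) atTop (𝓝 p)) :
    Tendsto (fun n => Q * S n * Q) atTop (𝓝 (p • r)) := by
  let defect (M : Matrix (Fin k) (Fin k) ℂ) :=
    (Q * M * Q - M, M - krausMap (fun i => A i * Q) M, M.trace.re)
  have hidem : Q * Q = Q := hQ.isIdempotentElem
  have hfix : Tendsto (fun n => Q * (S n - krausMap A (S n)) * Q) atTop (𝓝 0) := by
    simpa using (hasymp.const_mul Q).mul_const Q
  have hdefect (n : ℕ) : defect (Q * S n * Q) =
      (0, Q * (S n - krausMap A (S n)) * Q, (Q * S n).trace.re) := by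
    refine Prod.ext ?_ (Prod.ext ?_ ?_)
    · have : Q * (Q * S n * Q) * Q = Q * Q * S n * (Q * Q) := by simp only [Matrix.mul_assoc]
      simp only [defect, this, hidem, sub_self]
    · simp only [defect, krausMap_compress hQ hcomm, Matrix.mul_sub, Matrix.sub_mul]
    · simp only [defect, trace_compress hQ]
  refine tendsto_of_isCompact_of_unique_preimage (f := defect) (y := (0, 0, p))
    (isCompact_posSemidef_trace_re_le (p + 1)) ?_ (by fun_prop) ?_ ?_
  · filter_upwards [htr.eventually_le_const (lt_add_one p)] with n hn
    exact ⟨posSemidef_compress hQ (hS n), by rwa [trace_compress hQ]⟩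
  · simpa only [hdefect] using tendsto_const_nhds.prodMk_nhds (hfix.prodMk_nhds htr)
  · rintro M ⟨hM, -⟩ hMp
    simp only [defect, Prod.mk.injEq, sub_eq_zero] at hMp
    obtain ⟨hcompress, hinv, rfl⟩ := hMp
    exact hr.eq_smul hM hp hcompress hinv.symm

end InvariantState

section JumpFrequency

variable {ι : Type*} [Fintype ι] {k : ℕ} {A : ι → Matrix (Fin k) (Fin k) ℂ}
  {x : ℕ → Matrix (Fin k) (Fin k) ℂ} {J : ι → ℕ → ℝ}

lemma tendsto_cesaroMean_sub_krausMap {C : ℝ} (hx : ∀ n, ‖x n‖ ≤ C) (hJ : ∀ s, ∑ i, J i s = 1)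
    (hnoise : ∀ i, Tendsto (fun n => cesaroMean n fun s => J i s • x (s + 1) - A i * x s * (A i)ᴴ)
      atTop (𝓝 0)) :
    Tendsto (fun n => cesaroMean n x - krausMap A (cesaroMean n x)) atTop (𝓝 0) := by
  have hsum := tendsto_finsetSum univ fun i _ => hnoise i
  have hdiff := hsum.sub (tendsto_cesaroMean_succ_sub hx)
  simp only [← map_sum, ← map_sub, sum_const_zero, sub_zero] at hdiff
  refine hdiff.congr fun n => ?_
  rw [krausMap_cesaroMean, ← map_sub]
  congr 1
  ext1 s
  simp only [Pi.sub_apply, Finset.sum_apply, sum_sub_distrib, ← sum_smul, hJ, one_smul, krausMap]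
  abel

/-- The averages of `J i s * Tr (Q x (s + 1))` are computed in two ways: as `Tr (Q x s) → p`, they
are asymptotic to `p` times the jump frequency, and by `hnoise` they tend to
`p * jumpProb A r i`. -/
theorem IsUniqueInvariantState.tendsto_cesaroMean_jump {Q r : Matrix (Fin k) (Fin k) ℂ}
    (hr : IsUniqueInvariantState A Q r) (hQ : IsStarProjection Q)
    (hcomm : ∀ i, Commute Q (A i)) (hx : ∀ n, IsDensity (x n))
    (hJ_abs : ∀ i s, |J i s| ≤ 1) (hJ_sum : ∀ s, ∑ i, J i s = 1)
    (hnoise : ∀ i, Tendsto (fun n => cesaroMean n fun s => J i s • x (s + 1) - A i * x s * (A i)ᴴ)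
      atTop (𝓝 0))
    {p : ℝ} (hp : 0 < p) (hlim : Tendsto (fun n => (Q * x n).trace.re) atTop (𝓝 p)) (i : ι) :
    Tendsto (fun n => cesaroMean n (J i)) atTop (𝓝 (jumpProb A r i)) := by
  have hx_norm (n : ℕ) : ‖x n‖ ≤ 1 := by
    simpa [(hx n).2] using norm_le_trace_re_of_posSemidef (hx n).1
  have hS : Tendsto (fun n => Q * cesaroMean n x * Q) atTop (𝓝 (p • r)) := by
    refine hr.tendsto_compress hQ hcomm (posSemidef_cesaroMean fun n => (hx n).1)
      (tendsto_cesaroMean_sub_krausMap hx_norm hJ_sum hnoise) hp ?_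
    simpa only [trace_mul_cesaroMean_re] using tendsto_cesaroMean hlim
  have hprob : Tendsto (fun n => jumpProb A (Q * cesaroMean n x * Q) i) atTop
      (𝓝 (p * jumpProb A r i)) := by
    have hcont : Continuous fun M => jumpProb A M i := by unfold jumpProb; fun_prop
    simpa [jumpProb, Function.comp_def] using (hcont.tendsto (p • r)).comp hS
  have hweighted : Tendsto (fun n =>
      cesaroMean n (fun s => J i s • (Q * x (s + 1)).trace.re) -
        jumpProb A (Q * cesaroMean n x * Q) i) atTop (𝓝 0) := by
    have hcont : Continuous fun M : Matrix (Fin k) (Fin k) ℂ => (Q * M).trace.re := by fun_prop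
    have htr := (hcont.tendsto 0).comp (hnoise i)
    simp only [Function.comp_def, Matrix.mul_zero, trace_zero, Complex.zero_re] at htr
    refine htr.congr fun n => ?_
    rw [trace_mul_cesaroMean_re, jumpProb_compress hQ (hcomm i), mul_cesaroMean_mul,
      trace_mul_cesaroMean_re, ← map_sub]
    congr 1
    ext1 s
    simp [Matrix.mul_sub]
  have hfreq := ((hweighted.add hprob).sub
    (tendsto_cesaroMean_smul_sub (hJ_abs i) ((tendsto_add_atTop_iff_nat 1).2 hlim))).const_mul p⁻¹
  simpa [hp.ne', mul_comm _ p] using hfreq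

end JumpFrequency

instance {k : ℕ} : SecondCountableTopology (Matrix (Fin k) (Fin k) ℂ) :=
  inferInstanceAs (SecondCountableTopology (Fin k → Fin k → ℂ))

instance {k : ℕ} : BorelSpace (Matrix (Fin k) (Fin k) ℂ) :=
  inferInstanceAs (BorelSpace (Fin k → Fin k → ℂ))

lemma dir_injective (d : ℕ) : Function.Injective (dir d) := by
  intro i j h
  ext
  by_cases hi : (i : ℕ) < d
  · have hcoord := congrFun h ⟨i, hi⟩
    by_cases hj : (j : ℕ) < d <;> simp only [dir, hi, hj, if_true, if_false] at hcoord <;>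
      split_ifs at hcoord <;> omega
  · by_cases hj : (j : ℕ) < d
    · have hcoord := congrFun h ⟨j, hj⟩
      simp only [dir, hi, hj, if_true, if_false] at hcoord
      split_ifs at hcoord
      omega
    · have hcoord := congrFun h ⟨i - d, by omega⟩
      simp only [dir, hi, hj, if_true, if_false] at hcoord
      split_ifs at hcoord
      omega

section Jumps

variable {d : ℕ} {Ω : Type*} (X : ℕ → Ω → Fin d → ℤ) (i : Fin (2 * d)) (n : ℕ) (ω : Ω)

/-- The indicator of a jump in direction `i` between times `n` and `n + 1`. -/
def jumpIndicator : ℝ :=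
  if X (n + 1) ω = X n ω + dir d i then 1 else 0

/-- The number `N_n(i)` of jumps in direction `i` up to time `n`. -/
def jumpCount : ℕ :=
  #{s ∈ Icc 1 n | X s ω - X (s - 1) ω = dir d i}

lemma abs_jumpIndicator_le_one : |jumpIndicator X i n ω| ≤ 1 := by
  unfold jumpIndicator
  split_ifs <;> simp

lemma sum_jumpIndicator_le_one : ∑ i, jumpIndicator X i n ω ≤ 1 := by
  by_cases h : ∃ i, X (n + 1) ω = X n ω + dir d i
  · obtain ⟨i, hi⟩ := h
    simp [jumpIndicator, hi, (dir_injective d).eq_iff]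
  · push Not at h
    simp [jumpIndicator, h]

lemma jumpCount_div_eq_cesaroMean :
    (jumpCount X i n ω : ℝ) / n = cesaroMean n fun s => jumpIndicator X i s ω := by
  have hshift : Icc 1 n = Ico (0 + 1) (n + 1) := by
    ext s
    simp only [mem_Icc, mem_Ico]
    omega
  rw [cesaroMean_apply, smul_eq_mul, div_eq_inv_mul, jumpCount, card_filter, Nat.cast_sum, hshift,
    range_eq_Ico, ← sum_Ico_add']
  simp [jumpIndicator, sub_eq_iff_eq_add']

end Jumps

namespace IsQTraj

variable {k d : ℕ} {Ω : Type} {mΩ : MeasurableSpace Ω} {A : Fin (2 * d) → Matrix (Fin k) (Fin k) ℂ}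
  {μ : Measure Ω} {ℱ : Filtration ℕ mΩ} {ρ : ℕ → Ω → Matrix (Fin k) (Fin k) ℂ}
  {X : ℕ → Ω → Fin d → ℤ}

lemma norm_le_one (h : IsQTraj A μ ℱ ρ X) (n : ℕ) : ∀ᵐ ω ∂μ, ‖ρ n ω‖ ≤ 1 := by
  filter_upwards [h.density n] with ω hω
  simpa [hω.2] using norm_le_trace_re_of_posSemidef hω.1

lemma measurable_jumpIndicator (h : IsQTraj A μ ℱ ρ X) (i : Fin (2 * d)) (n : ℕ) :
    Measurable[ℱ (n + 1)] (jumpIndicator X i n) :=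
  .ite (measurableSet_eq_fun (h.adapted_X (n + 1))
      (((h.adapted_X n).mono (ℱ.mono n.le_succ) le_rfl).add_const _))
    measurable_const measurable_const

lemma aemeasurable_of_tendsto_trace (h : IsQTraj A μ ℱ ρ X) {Q : Matrix (Fin k) (Fin k) ℂ}
    {p : Ω → ℝ}
    (hlim : ∀ᵐ ω ∂μ, Tendsto (fun n => (Q * ρ n ω).trace.re) atTop (𝓝 (p ω))) :
    AEMeasurable p μ := by
  have hcont : Continuous fun M : Matrix (Fin k) (Fin k) ℂ => (Q * M).trace.re := by fun_prop
  exact aemeasurable_of_tendsto_metrizable_ae atTop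
    (fun n => (hcont.measurable.comp ((h.adapted_ρ n).mono (ℱ.le n) le_rfl)).aemeasurable) hlim

lemma jumpIndicator_smul_succ_ae_eq (h : IsQTraj A μ ℱ ρ X) (i : Fin (2 * d)) (n : ℕ) :
    jumpIndicator X i n • ρ (n + 1) =ᵐ[μ] jumpIndicator X i n • fun ω =>
      (A i * ρ n ω * (A i)ᴴ).trace⁻¹ • (A i * ρ n ω * (A i)ᴴ) := by
  filter_upwards [h.update n i] with ω hω
  by_cases hjump : X (n + 1) ω = X n ω + dir d i
  · simp only [Pi.smul_apply', hω hjump]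
  · simp [jumpIndicator, hjump]

variable [IsFiniteMeasure μ]

lemma integrable_jumpIndicator (h : IsQTraj A μ ℱ ρ X) (i : Fin (2 * d)) (n : ℕ) :
    Integrable (jumpIndicator X i n) μ :=
  .of_bound ((h.measurable_jumpIndicator i n).mono (ℱ.le _) le_rfl).aestronglyMeasurable 1
    (ae_of_all _ (abs_jumpIndicator_le_one X i n))

lemma ae_sum_jumpIndicator_eq_one (h : IsQTraj A μ ℱ ρ X) (hA : ∑ i, (A i)ᴴ * A i = 1)
    (n : ℕ) : ∀ᵐ ω ∂μ, ∑ i, jumpIndicator X i n ω = 1 := by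
  have hprob (i) : ∫ ω, jumpIndicator X i n ω ∂μ = ∫ ω, jumpProb A (ρ n ω) i ∂μ :=
    (integral_condExp (ℱ.le n)).symm.trans (integral_congr_ae (h.prob n i))
  have hint (i) : Integrable (fun ω => jumpProb A (ρ n ω) i) μ :=
    integrable_condExp.congr (h.prob n i)
  have htotal : ∀ᵐ ω ∂μ, ∑ i, jumpProb A (ρ n ω) i = 1 := by
    filter_upwards [h.density n] with ω hω
    rw [sum_jumpProb hA, hω.2, Complex.one_re]
  refine (integral_eq_iff_of_ae_le
    (integrable_finsetSum _ fun i _ => h.integrable_jumpIndicator i n) (integrable_const 1)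
    (ae_of_all _ (sum_jumpIndicator_le_one X n))).1 ?_
  rw [integral_finsetSum _ fun i _ => h.integrable_jumpIndicator i n]
  simp only [hprob]
  rw [← integral_finsetSum _ fun i _ => hint i]
  exact integral_congr_ae htotal

lemma condExp_jumpIndicator_smul_succ (h : IsQTraj A μ ℱ ρ X) (i : Fin (2 * d)) (n : ℕ) :
    μ[jumpIndicator X i n • ρ (n + 1) | ℱ n] =ᵐ[μ] fun ω => A i * ρ n ω * (A i)ᴴ := by
  have hpos : ∀ᵐ ω ∂μ, (A i * ρ n ω * (A i)ᴴ).PosSemidef := by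
    filter_upwards [h.density n] with ω hω using hω.1.mul_mul_conjTranspose_same (A i)
  set τ : Ω → Matrix (Fin k) (Fin k) ℂ := fun ω =>
    (A i * ρ n ω * (A i)ᴴ).trace⁻¹ • (A i * ρ n ω * (A i)ᴴ)
  have hτ_meas : StronglyMeasurable[ℱ n] τ := by
    have hconj : Measurable[ℱ n] fun ω => A i * ρ n ω * (A i)ᴴ :=
      (show Continuous fun M => A i * M * (A i)ᴴ by fun_prop).measurable.comp (h.adapted_ρ n)
    have htrace : Measurable[ℱ n] fun ω => (A i * ρ n ω * (A i)ᴴ).trace :=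
      (show Continuous fun M : Matrix (Fin k) (Fin k) ℂ => M.trace by fun_prop).measurable.comp
        hconj
    exact (htrace.inv.smul hconj).stronglyMeasurable
  have hτ_norm : ∀ᵐ ω ∂μ, ‖τ ω‖ ≤ 1 := by
    filter_upwards [hpos] with ω hω using norm_inv_trace_smul_le_one hω
  have hpull : μ[jumpIndicator X i n • τ | ℱ n] =ᵐ[μ] μ[jumpIndicator X i n | ℱ n] • τ :=
    condExp_stronglyMeasurable_bilin_of_bound (ContinuousLinearMap.lsmul ℝ ℝ).flip (ℱ.le n)
      hτ_meas (h.integrable_jumpIndicator i n) 1 hτ_norm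
  have hprob : μ[jumpIndicator X i n | ℱ n] =ᵐ[μ] fun ω => (A i * ρ n ω * (A i)ᴴ).trace.re :=
    h.prob n i
  filter_upwards [condExp_congr_ae (h.jumpIndicator_smul_succ_ae_eq i n), hpull, hprob, hpos]
    with ω hcongr hω hω_prob hω_pos
  rw [hcongr, hω, Pi.smul_apply', hω_prob, trace_re_smul_inv_trace_smul hω_pos]

lemma ae_tendsto_cesaroMean_noise (h : IsQTraj A μ ℱ ρ X) (i : Fin (2 * d)) :
    ∀ᵐ ω ∂μ, Tendsto (fun n => cesaroMean n fun s =>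
      jumpIndicator X i s ω • ρ (s + 1) ω - A i * ρ s ω * (A i)ᴴ) atTop (𝓝 0) := by
  have hmeas (n : ℕ) : StronglyMeasurable[ℱ (n + 1)] (jumpIndicator X i n • ρ (n + 1)) :=
    ((h.measurable_jumpIndicator i n).smul (h.adapted_ρ (n + 1))).stronglyMeasurable
  have hbdd (n : ℕ) : ∀ᵐ ω ∂μ, ‖(jumpIndicator X i n • ρ (n + 1)) ω‖ ≤ 1 := by
    filter_upwards [h.norm_le_one (n + 1)] with ω hω
    rw [Pi.smul_apply', norm_smul]
    exact mul_le_one₀ (abs_jumpIndicator_le_one X i n ω) (norm_nonneg _) hω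
  filter_upwards [ae_tendsto_cesaroMean_sub_condExp hmeas hbdd,
    ae_all_iff.2 (h.condExp_jumpIndicator_smul_succ i)] with ω hω hcond
  simp only [hcond, Pi.smul_apply'] at hω
  exact hω

theorem ae_tendsto_jumpCount_div (h : IsQTraj A μ ℱ ρ X) (hA : ∑ i, (A i)ᴴ * A i = 1)
    {Q r : Matrix (Fin k) (Fin k) ℂ} (hQ : IsStarProjection Q) (hcomm : ∀ i, Commute Q (A i))
    (hr : IsUniqueInvariantState A Q r) {p : Ω → ℝ}
    (hlim : ∀ᵐ ω ∂μ, Tendsto (fun n => (Q * ρ n ω).trace.re) atTop (𝓝 (p ω)))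
    (i : Fin (2 * d)) :
    ∀ᵐ ω ∂μ, 0 < p ω →
      Tendsto (fun n => (jumpCount X i n ω : ℝ) / n) atTop (𝓝 (jumpProb A r i)) := by
  simp only [jumpCount_div_eq_cesaroMean]
  filter_upwards [hlim, ae_all_iff.2 h.ae_tendsto_cesaroMean_noise,
    ae_all_iff.2 (h.ae_sum_jumpIndicator_eq_one hA), ae_all_iff.2 h.density]
    with ω hω hnoise hsum hdensity hp
  exact hr.tendsto_cesaroMean_jump hQ hcomm hdensity
    (fun i s => abs_jumpIndicator_le_one X i s ω) hsum hnoise hp hω i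

end IsQTraj

section Singularity

variable {Ω : Type*} {mΩ : MeasurableSpace Ω}

lemma ae_withDensity_ofReal_div {μ : Measure Ω} {p : Ω → ℝ} (hp : AEMeasurable p μ) {c : ℝ}
    (hc : 0 < c) {good : Ω → Prop} (h : ∀ᵐ ω ∂μ, 0 < p ω → good ω) :
    ∀ᵐ ω ∂μ.withDensity fun ω => ENNReal.ofReal (p ω / c), good ω := by
  rw [ae_withDensity_iff' (hp.div_const c).ennreal_ofReal]
  filter_upwards [h] with ω hω hne
  exact hω ((div_pos_iff_of_pos_right hc).1 (ENNReal.ofReal_pos.1 (pos_iff_ne_zero.2 hne)))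

lemma mutuallySingular_of_ae_tendsto {E : Type*} [TopologicalSpace E] [T2Space E]
    {μ ν : Measure Ω} {f : ℕ → Ω → E} {a b : E} (hab : a ≠ b)
    (hμ : ∀ᵐ ω ∂μ, Tendsto (fun n => f n ω) atTop (𝓝 a))
    (hν : ∀ᵐ ω ∂ν, Tendsto (fun n => f n ω) atTop (𝓝 b)) : μ.MutuallySingular ν := by
  refine Measure.MutuallySingular.mk (ae_iff.1 hμ) (ae_iff.1 hν) fun ω _ => ?_
  by_contra hω
  simp only [Set.mem_union, not_or, Set.mem_ofPred_eq, not_not] at hω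
  exact hab (tendsto_nhds_unique hω.1 hω.2)

end Singularity

theorem stmt19_general {k d : ℕ} {ι : Type*}
    (A : Fin (2 * d) → Matrix (Fin k) (Fin k) ℂ) (hA : ∑ i, (A i)ᴴ * A i = 1)
    (P : ι → Matrix (Fin k) (Fin k) ℂ) (hP : ∀ j, IsStarProjection (P j))
    (hcomm : ∀ j i, Commute (P j) (A i))
    (ρinf : ι → Matrix (Fin k) (Fin k) ℂ) (hρinf : ∀ j, IsUniqueInvariantState A (P j) (ρinf j))
    (hm : Function.Injective fun j => jumpProb A (ρinf j))
    {Ω : Type} {mΩ : MeasurableSpace Ω} (μ : Measure Ω) [IsFiniteMeasure μ]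
    (ℱ : Filtration ℕ mΩ) (ρ : ℕ → Ω → Matrix (Fin k) (Fin k) ℂ) (X : ℕ → Ω → Fin d → ℤ)
    (hQT : IsQTraj A μ ℱ ρ X) (hp₀ : ∀ j, 0 < ∫ ω, (P j * ρ 0 ω).trace.re ∂μ)
    (pinf : ι → Ω → ℝ)
    (hpinf : ∀ j, ∀ᵐ ω ∂μ, Tendsto (fun n => (P j * ρ n ω).trace.re) atTop (𝓝 (pinf j ω)))
    (μj : ι → Measure Ω)
    (hμj : ∀ j, μj j = μ.withDensity fun ω =>
      ENNReal.ofReal (pinf j ω / ∫ ω', (P j * ρ 0 ω').trace.re ∂μ)) :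
    (∀ j i, ∀ᵐ ω ∂(μj j),
      Tendsto (fun n => (jumpCount X i n ω : ℝ) / n) atTop (𝓝 (jumpProb A (ρinf j) i))) ∧
    Pairwise fun j j' => (μj j).MutuallySingular (μj j') := by
  have hfreq (j i) : ∀ᵐ ω ∂(μj j),
      Tendsto (fun n => (jumpCount X i n ω : ℝ) / n) atTop (𝓝 (jumpProb A (ρinf j) i)) := by
    rw [hμj j]
    exact ae_withDensity_ofReal_div (hQT.aemeasurable_of_tendsto_trace (hpinf j)) (hp₀ j)
      (hQT.ae_tendsto_jumpCount_div hA (hP j) (hcomm j) (hρinf j) (hpinf j) i)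
  refine ⟨hfreq, fun j j' hjj' => ?_⟩
  obtain ⟨i, hi⟩ := Function.ne_iff.1 (hm.ne hjj')
  exact mutuallySingular_of_ae_tendsto hi (hfreq j i) (hfreq j' i)

/-- (Mutual singularity of the conditioned measures.) Under (H1'),
(H2), (H3), for each `j`, under `ℙ_ρ^{(j)} = (p_∞^{(j)}/p_0^{(j)}) ℙ_ρ` the frequencies
of jumps satisfy `N_n(i)/n → m_i^{(j)} = Tr(A_i ρ_∞^{(j)} A_i^*)` a.s. for every
direction `i`, and consequently the measures `ℙ_ρ^{(1)}, …, ℙ_ρ^{(N)}` are pairwise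
mutually singular. -/
theorem stmt19 {k d N : ℕ} (hd : 1 ≤ d)
    (A : Fin (2 * d) → Matrix (Fin k) (Fin k) ℂ)
    (hA : ∑ j, (A j)ᴴ * A j = 1)
    (P : Fin N → Matrix (Fin k) (Fin k) ℂ)
    (hsa : ∀ j, (P j)ᴴ = P j) (hidem : ∀ j, P j * P j = P j)
    (horth : ∀ j j', j ≠ j' → P j * P j' = 0)
    (hsum : ∑ j, P j = 1)
    (hcomm : ∀ (i : Fin (2 * d)) (j : Fin N), P j * A i = A i * P j)
    (ρinfj : Fin N → Matrix (Fin k) (Fin k) ℂ)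
    (hρinfj : ∀ j, IsDensity (ρinfj j) ∧ P j * ρinfj j * P j = ρinfj j)
    (hinvj : ∀ j, (∑ i, (A i * P j) * ρinfj j * (A i * P j)ᴴ) = ρinfj j)
    (huniqj : ∀ j σ, IsDensity σ → P j * σ * P j = σ →
      (∑ i, (A i * P j) * σ * (A i * P j)ᴴ) = σ → σ = ρinfj j)
    (hm : ∀ j j', j ≠ j' →
      (fun i : Fin (2 * d) => ((A i * ρinfj j * (A i)ᴴ).trace).re) ≠
        (fun i : Fin (2 * d) => ((A i * ρinfj j' * (A i)ᴴ).trace).re))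
    {Ω : Type} {mΩ : MeasurableSpace Ω} (μ : Measure Ω) [IsProbabilityMeasure μ]
    (ℱ : Filtration ℕ mΩ)
    (ρ : ℕ → Ω → Matrix (Fin k) (Fin k) ℂ) (X : ℕ → Ω → Fin d → ℤ)
    (hQT : IsQTraj A μ ℱ ρ X)
    (ρ₀ : Matrix (Fin k) (Fin k) ℂ) (hρ₀ : IsDensity ρ₀)
    (hinit : ∀ ω, ρ 0 ω = ρ₀)
    (hp₀ : ∀ j, 0 < ((P j * ρ₀).trace).re)
    (pinf : Fin N → Ω → ℝ)
    (has : ∀ j, ∀ᵐ ω ∂μ,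
      Tendsto (fun n => ((P j * ρ n ω).trace).re) atTop (nhds (pinf j ω)))
    (μj : Fin N → Measure Ω)
    (hμj : ∀ j, μj j =
      μ.withDensity (fun ω => ENNReal.ofReal (pinf j ω / ((P j * ρ₀).trace).re))) :
    (∀ (j : Fin N) (i : Fin (2 * d)), ∀ᵐ ω ∂(μj j),
      Tendsto
        (fun n : ℕ =>
          (((Finset.Icc 1 n).filter fun s => X s ω - X (s - 1) ω = dir d i).card : ℝ) / n)
        atTop (nhds (((A i * ρinfj j * (A i)ᴴ).trace).re))) ∧
    (∀ j j', j ≠ j' → Measure.MutuallySingular (μj j) (μj j')) := by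
  have hp (j) : ∫ ω, (P j * ρ 0 ω).trace.re ∂μ = (P j * ρ₀).trace.re := by simp [hinit]
  obtain ⟨hfreq, hsing⟩ := stmt19_general A hA P (fun j => ⟨hidem j, hsa j⟩)
    (fun j i => hcomm i j) ρinfj
    (fun j => ⟨⟨(hρinfj j).1, (hρinfj j).2, hinvj j⟩, fun σ hσ =>
      huniqj j σ hσ.isDensity hσ.compress_eq hσ.krausMap_eq⟩)
    (fun j j' => not_imp_not.1 (hm j j')) μ ℱ ρ X hQT (by simpa only [hp] using hp₀) pinf has μj
    (by simpa only [hp] using hμj)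
  exact ⟨hfreq, fun _ _ hjj' => hsing hjj'⟩
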